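/- arXiv:1910.12450 — 8 statements merged into one kernel-verified Lean document; each statement's English description precedes it below -/
import Mathlib

section
/- Let X ⊆ ℝ^m and Y ⊆ ℝ^n be nonempty, compact, and convex sets, and let h : ℝ^m → ℝ be an affine function (h(x) = ⟨a,x⟩ + b) with h(x) ≥ 0 for all x ∈ X. Then the scaled extension X ⊴^h Y is nonempty, compact, and convex. -/
/-- The scaled extension of `X ⊆ ℝ^m` with `Y ⊆ ℝ^n` via `h : ℝ^m → ℝ`,
namely `X ⊴^h Y = {(x, h(x) • y) : x ∈ X, y ∈ Y}`. -/
def scaledExt {m n : ℕ} (X : Set (Fin m → ℝ)) (Y : Set (Fin n → ℝ))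
    (h : (Fin m → ℝ) → ℝ) : Set ((Fin m → ℝ) × (Fin n → ℝ)) :=
  {p | ∃ x ∈ X, ∃ y ∈ Y, p = (x, h x • y)}

theorem scaledExt_nonempty_isCompact_convex {m n : ℕ}
    (X : Set (Fin m → ℝ)) (Y : Set (Fin n → ℝ))
    (a : Fin m → ℝ) (b : ℝ) (h : (Fin m → ℝ) → ℝ)
    (hdef : ∀ x, h x = (∑ i, a i * x i) + b)
    (hXne : X.Nonempty) (hXc : IsCompact X) (hXconv : Convex ℝ X)
    (hYne : Y.Nonempty) (hYc : IsCompact Y) (hYconv : Convex ℝ Y)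
    (hnn : ∀ x ∈ X, 0 ≤ h x) :
    (scaledExt X Y h).Nonempty ∧ IsCompact (scaledExt X Y h) ∧
      Convex ℝ (scaledExt X Y h) := by
  have hcont : Continuous h := by
    have : h = fun x => (∑ i, a i * x i) + b := funext hdef
    rw [this]
    fun_prop
  refine ⟨?_, ?_, ?_⟩
  · obtain ⟨x, hx⟩ := hXne
    obtain ⟨y, hy⟩ := hYne
    exact ⟨_, x, hx, y, hy, rfl⟩
  · have himg : scaledExt X Y h = (fun p : (Fin m → ℝ) × (Fin n → ℝ) => (p.1, h p.1 • p.2)) '' (X ×ˢ Y) := by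
      ext p
      constructor
      · rintro ⟨x, hx, y, hy, rfl⟩
        exact ⟨(x, y), ⟨hx, hy⟩, rfl⟩
      · rintro ⟨⟨x, y⟩, ⟨hx, hy⟩, rfl⟩
        exact ⟨x, hx, y, hy, rfl⟩
    rw [himg]
    exact (hXc.prod hYc).image (by fun_prop)
  · rintro _ ⟨x, hx, y, hy, rfl⟩ _ ⟨x', hx', y', hy', rfl⟩ s t hs ht hst
    have hz : h (s • x + t • x') = s * h x + t * h x' := by
      have e : ∑ i, a i * (s • x + t • x') i
          = s * ∑ i, a i * x i + t * ∑ i, a i * x' i := by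
        rw [Finset.mul_sum, Finset.mul_sum, ← Finset.sum_add_distrib]
        refine Finset.sum_congr rfl fun i _ => ?_
        simp only [Pi.add_apply, Pi.smul_apply, smul_eq_mul]
        ring
      rw [hdef, hdef, hdef, e]
      linear_combination (-b) * hst
    have hp : 0 ≤ s * h x := mul_nonneg hs (hnn x hx)
    have hq : 0 ≤ t * h x' := mul_nonneg ht (hnn x' hx')
    refine ⟨s • x + t • x', hXconv hx hx' hs ht hst, ?_⟩
    rw [hz]
    rcases (add_nonneg hp hq).eq_or_lt with h0 | hpos
    · have h1 : s * h x = 0 := by linarith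
      have h2 : t * h x' = 0 := by linarith
      refine ⟨y, hy, ?_⟩
      simp [smul_smul, h1, h2]
    · refine ⟨_, hYconv hy hy' (div_nonneg hp hpos.le) (div_nonneg hq hpos.le)
        (by rw [← add_div, div_self hpos.ne']), ?_⟩
      simp only [Prod.smul_mk, Prod.mk_add_mk, smul_add, smul_smul,
        mul_div_cancel₀ _ hpos.ne', Prod.mk.injEq, true_and]
end

section
/- Let X ⊆ ℝ^m and Y ⊆ ℝ^n be nonempty convex sets, and let h : ℝ^m → ℝ be an affine function (h(x) = ⟨a,x⟩ + b) with h(x) ≥ 0 for all x ∈ X. Then the scaled extension X ⊴^h Y is convex. -/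
theorem scaledExt_convex {m n : ℕ}
    (X : Set (Fin m → ℝ)) (Y : Set (Fin n → ℝ))
    (a : Fin m → ℝ) (b : ℝ) (h : (Fin m → ℝ) → ℝ)
    (hdef : ∀ x, h x = (∑ i, a i * x i) + b)
    (hXne : X.Nonempty) (hXconv : Convex ℝ X)
    (hYne : Y.Nonempty) (hYconv : Convex ℝ Y)
    (hnn : ∀ x ∈ X, 0 ≤ h x) :
    Convex ℝ (scaledExt X Y h) := by
  rintro _ ⟨x₁, hx₁, y₁, hy₁, rfl⟩ _ ⟨x₂, hx₂, y₂, hy₂, rfl⟩ s t hs ht hst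
  have key : h (s • x₁ + t • x₂) = s * h x₁ + t * h x₂ := by
    have e : ∑ i, a i * (s • x₁ + t • x₂) i
        = s * ∑ i, a i * x₁ i + t * ∑ i, a i * x₂ i := by
      rw [Finset.mul_sum, Finset.mul_sum, ← Finset.sum_add_distrib]
      refine Finset.sum_congr rfl fun i _ => ?_
      simp only [Pi.add_apply, Pi.smul_apply, smul_eq_mul]
      ring
    rw [hdef, hdef x₁, hdef x₂, e]
    linear_combination (-b) * hst
  have p₁ : 0 ≤ s * h x₁ := mul_nonneg hs (hnn _ hx₁)
  have p₂ : 0 ≤ t * h x₂ := mul_nonneg ht (hnn _ hx₂)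
  have hX := hXconv hx₁ hx₂ hs ht hst
  rcases (add_nonneg p₁ p₂).eq_or_lt with h0 | hpos
  · have z₁ : s * h x₁ = 0 := by linarith
    have z₂ : t * h x₂ = 0 := by linarith
    refine ⟨_, hX, y₁, hy₁, ?_⟩
    rw [key, z₁, z₂]
    simp [smul_smul, z₁, z₂]
  · refine ⟨_, hX, _, hYconv hy₁ hy₂ (div_nonneg p₁ hpos.le) (div_nonneg p₂ hpos.le)
      (by rw [← add_div, div_self hpos.ne']), ?_⟩
    rw [key, smul_add, smul_smul, smul_smul, mul_div_cancel₀ _ hpos.ne',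
      mul_div_cancel₀ _ hpos.ne']
    simp [smul_smul]
end

section
/- Let X ⊆ ℝ^m be a nonempty closed set, let Y ⊆ ℝ^n be a nonempty compact set, and let h : ℝ^m → ℝ be a continuous function with h(x) ≥ 0 for all x ∈ X. Then the scaled extension X ⊴^h Y is a closed subset of ℝ^m × ℝ^n. -/
theorem scaledExt_isClosed {m n : ℕ}
    (X : Set (Fin m → ℝ)) (Y : Set (Fin n → ℝ)) (h : (Fin m → ℝ) → ℝ)
    (hXne : X.Nonempty) (hXcl : IsClosed X)
    (hYne : Y.Nonempty) (hYc : IsCompact Y)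
    (hcont : Continuous h) (hnn : ∀ x ∈ X, 0 ≤ h x) :
    IsClosed (scaledExt X Y h) := by
  haveI : CompactSpace Y := isCompact_iff_compactSpace.mp hYc
  have hC : IsClosed {q : ((Fin m → ℝ) × (Fin n → ℝ)) × Y |
      q.1.1 ∈ X ∧ q.1.2 = h q.1.1 • (q.2 : Fin n → ℝ)} := by
    apply IsClosed.inter
    · exact hXcl.preimage (continuous_fst.comp continuous_fst)
    · exact isClosed_eq (by fun_prop) (by fun_prop)
  have key := isClosedMap_fst_of_compactSpace _ hC
  convert key using 1
  ext ⟨a, b⟩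
  constructor
  · rintro ⟨x, hx, y, hy, hp⟩
    obtain ⟨rfl, rfl⟩ := Prod.mk.inj hp
    exact ⟨((a, h a • y), ⟨y, hy⟩), ⟨hx, rfl⟩, rfl⟩
  · rintro ⟨⟨⟨x, z⟩, ⟨y, hy⟩⟩, ⟨hx, hz⟩, hp⟩
    obtain ⟨rfl, rfl⟩ := Prod.mk.inj hp
    exact ⟨x, hx, y, hy, Prod.ext rfl hz⟩
end

section
/- Let X ⊆ ℝ^m and Y ⊆ ℝ^n be nonempty compact sets, let h : ℝ^m → ℝ be given by h(x) = ⟨a,x⟩ + b with h(x) ≥ 0 for all x ∈ X, and let Z = X ⊴^h Y be the scaled extension. Then for any ℓ = (ℓ_x, ℓ_y) ∈ ℝ^m × ℝ^n, the minimum over z ∈ Z of ⟨ℓ, z⟩ equals (min over x ∈ X of ⟨ℓ_x + (min over y ∈ Y of ⟨ℓ_y, y⟩)·a, x⟩) + b · (min over y ∈ Y of ⟨ℓ_y, y⟩). -/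
/-- Euclidean inner product on `ℝ^k`. -/
def dot {k : ℕ} (u v : Fin k → ℝ) : ℝ := ∑ i, u i * v i

theorem dot_cont_aux {k : ℕ} (u : Fin k → ℝ) : Continuous (fun v => dot u v) := by
  unfold dot
  fun_prop

theorem dot_add_smul_aux {k : ℕ} (u a v : Fin k → ℝ) (c : ℝ) :
    dot (u + c • a) v = dot u v + c * dot a v := by
  simp only [dot, Pi.add_apply, Pi.smul_apply, smul_eq_mul, Finset.mul_sum,
    ← Finset.sum_add_distrib]
  exact Finset.sum_congr rfl fun i _ => by ring

theorem dot_smul_aux {k : ℕ} (u v : Fin k → ℝ) (c : ℝ) :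
    dot u (c • v) = c * dot u v := by
  simp only [dot, Pi.smul_apply, smul_eq_mul, Finset.mul_sum]
  exact Finset.sum_congr rfl fun i _ => by ring

theorem min_linear_over_scaledExt {m n : ℕ}
    (X : Set (Fin m → ℝ)) (Y : Set (Fin n → ℝ))
    (a : Fin m → ℝ) (b : ℝ) (h : (Fin m → ℝ) → ℝ)
    (hdef : ∀ x, h x = dot a x + b)
    (hXne : X.Nonempty) (hXc : IsCompact X)
    (hYne : Y.Nonempty) (hYc : IsCompact Y)
    (hnn : ∀ x ∈ X, 0 ≤ h x)
    (ℓx : Fin m → ℝ) (ℓy : Fin n → ℝ) :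
    sInf ((fun z : (Fin m → ℝ) × (Fin n → ℝ) => dot ℓx z.1 + dot ℓy z.2) ''
        scaledExt X Y h)
      = sInf ((fun x => dot (ℓx + sInf ((fun y => dot ℓy y) '' Y) • a) x) '' X)
        + b * sInf ((fun y => dot ℓy y) '' Y) := by
  obtain ⟨y0, hy0, hy0e, hy0m⟩ :=
    hYc.exists_sInf_image_eq_and_le hYne (dot_cont_aux ℓy).continuousOn
  rw [hy0e]
  obtain ⟨x0, hx0, hx0e, hx0m⟩ :=
    hXc.exists_sInf_image_eq_and_le hXne (dot_cont_aux (ℓx + dot ℓy y0 • a)).continuousOn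
  rw [hx0e]
  refine IsLeast.csInf_eq ⟨⟨(x0, h x0 • y0), ⟨x0, hx0, y0, hy0, rfl⟩, ?_⟩, ?_⟩
  · simp only [dot_smul_aux, dot_add_smul_aux, hdef]
    ring
  · rintro _ ⟨_, ⟨x, hx, y, hy, rfl⟩, rfl⟩
    have h1 := hx0m x hx
    have h2 := mul_le_mul_of_nonneg_left (hy0m y hy) (hnn x hx)
    simp only [dot_smul_aux, dot_add_smul_aux, hdef] at h1 h2 ⊢
    linarith
end

section
/- Let X ⊆ ℝ^m and Y ⊆ ℝ^n be nonempty compact sets, let h : ℝ^m → ℝ be given by h(x) = ⟨a,x⟩ + b with h(x) ≥ 0 for all x ∈ X, and let Z = X ⊴^h Y. Fix T ≥ 1, points x^1,…,x^T ∈ X and y^1,…,y^T ∈ Y, and loss vectors ℓ_x^1,…,ℓ_x^T ∈ ℝ^m and ℓ_y^1,…,ℓ_y^T ∈ ℝ^n. Then the cumulative regret over Z of the decisions z^t = (x^t, h(x^t)•y^t), namely Σ_{t=1}^T (⟨ℓ_x^t, x^t⟩ + h(x^t)⟨ℓ_y^t, y^t⟩) − min_{ẑ ∈ Z} Σ_{t=1}^T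 ⟨(ℓ_x^t, ℓ_y^t), ẑ⟩, equals Σ_{t=1}^T (⟨ℓ_x^t, x^t⟩ + h(x^t)⟨ℓ_y^t, y^t⟩) − min_{x̂ ∈ X} { Σ_{t=1}^T ⟨ℓ_x^t, x̂⟩ + h(x̂) · min_{ŷ ∈ Y} Σ_{t=1}^T ⟨ℓ_y^t, ŷ⟩ }. -/
theorem regret_over_scaledExt_eq {m n : ℕ}
    (X : Set (Fin m → ℝ)) (Y : Set (Fin n → ℝ))
    (a : Fin m → ℝ) (b : ℝ) (h : (Fin m → ℝ) → ℝ)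
    (hdef : ∀ x, h x = dot a x + b)
    (hXne : X.Nonempty) (hXc : IsCompact X)
    (hYne : Y.Nonempty) (hYc : IsCompact Y)
    (hnn : ∀ x ∈ X, 0 ≤ h x)
    (T : ℕ) (hT : 1 ≤ T)
    (x : ℕ → Fin m → ℝ) (y : ℕ → Fin n → ℝ)
    (hx : ∀ t < T, x t ∈ X) (hy : ∀ t < T, y t ∈ Y)
    (lx : ℕ → Fin m → ℝ) (ly : ℕ → Fin n → ℝ) :
    (∑ t ∈ Finset.range T, (dot (lx t) (x t) + h (x t) * dot (ly t) (y t)))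
      - sInf ((fun zhat : (Fin m → ℝ) × (Fin n → ℝ) =>
          ∑ t ∈ Finset.range T, (dot (lx t) zhat.1 + dot (ly t) zhat.2)) ''
            scaledExt X Y h)
    = (∑ t ∈ Finset.range T, (dot (lx t) (x t) + h (x t) * dot (ly t) (y t)))
      - sInf ((fun xhat =>
          (∑ t ∈ Finset.range T, dot (lx t) xhat)
            + h xhat * sInf ((fun yhat => ∑ t ∈ Finset.range T, dot (ly t) yhat) '' Y))
          '' X) := by
  have hdot : ∀ {k : ℕ} (u : Fin k → ℝ), Continuous (fun v => dot u v) := by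
    intro k u
    unfold dot
    fun_prop
  have hsm : ∀ {k : ℕ} (u v : Fin k → ℝ) (c : ℝ), dot u (c • v) = c * dot u v := by
    intro k u v c
    simp only [dot, Finset.mul_sum, Pi.smul_apply, smul_eq_mul]
    exact Finset.sum_congr rfl fun i _ => by ring
  have hG : Continuous (fun yhat : Fin n → ℝ => ∑ t ∈ Finset.range T, dot (ly t) yhat) :=
    continuous_finset_sum _ fun t _ => hdot (ly t)
  have hL : Continuous (fun xhat : Fin m → ℝ => ∑ t ∈ Finset.range T, dot (lx t) xhat) :=
    continuous_finset_sum _ fun t _ => hdot (lx t)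
  have hh : Continuous h := by
    rw [show h = fun x => dot a x + b from funext hdef]
    exact (hdot a).add continuous_const
  obtain ⟨y0, hy0, hmin⟩ := hYc.exists_isMinOn hYne hG.continuousOn
  have e1 : sInf ((fun yhat => ∑ t ∈ Finset.range T, dot (ly t) yhat) '' Y)
      = ∑ t ∈ Finset.range T, dot (ly t) y0 := by
    apply IsLeast.csInf_eq
    refine ⟨⟨y0, hy0, rfl⟩, ?_⟩
    rintro _ ⟨y', hy', rfl⟩
    exact hmin hy'
  rw [e1]
  obtain ⟨x0, hx0, hminx⟩ := hXc.exists_isMinOn hXne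
    (hL.add (hh.mul_const (∑ t ∈ Finset.range T, dot (ly t) y0))).continuousOn
  have key : ∀ (x' : Fin m → ℝ) (y' : Fin n → ℝ),
      ∑ t ∈ Finset.range T, (dot (lx t) x' + dot (ly t) (h x' • y'))
      = (∑ t ∈ Finset.range T, dot (lx t) x')
        + h x' * ∑ t ∈ Finset.range T, dot (ly t) y' := by
    intro x' y'
    simp only [hsm, Finset.sum_add_distrib, Finset.mul_sum]
  congr 1
  trans (∑ t ∈ Finset.range T, dot (lx t) x0)
        + h x0 * ∑ t ∈ Finset.range T, dot (ly t) y0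
  · apply IsLeast.csInf_eq
    refine ⟨⟨(x0, h x0 • y0), ⟨x0, hx0, y0, hy0, rfl⟩, key x0 y0⟩, ?_⟩
    rintro _ ⟨_, ⟨x', hx', y', hy', rfl⟩, rfl⟩
    have h1 : (∑ t ∈ Finset.range T, dot (lx t) x0)
        + h x0 * ∑ t ∈ Finset.range T, dot (ly t) y0 ≤ (∑ t ∈ Finset.range T, dot (lx t) x')
        + h x' * ∑ t ∈ Finset.range T, dot (ly t) y0 := hminx hx'
    have h2 : ∑ t ∈ Finset.range T, dot (ly t) y0 ≤ ∑ t ∈ Finset.range T, dot (ly t) y' :=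
      hmin hy'
    have h3 := mul_le_mul_of_nonneg_left h2 (hnn x' hx')
    have h4 := key x' y'
    simp only
    linarith
  · symm
    apply IsLeast.csInf_eq
    refine ⟨⟨x0, hx0, rfl⟩, ?_⟩
    rintro _ ⟨x', hx', rfl⟩
    exact hminx hx'
end

section
/- Let X ⊆ ℝ^m and Y ⊆ ℝ^n be nonempty compact convex sets and A an m×n real matrix. Fix T ≥ 1 and points x^1,…,x^T ∈ X, y^1,…,y^T ∈ Y. Define the average decisions x̄ := (1/T) Σ_{t=1}^T x^t and ȳ := (1/T) Σ_{t=1}^T y^t, the cumulative regrets R_X^T := Σ_{t=1}^T ⟨−A y^t, x^t⟩ − min_{x̂ ∈ X} Σ_{t=1}^T ⟨−A y^t, x̂⟩ and R_Y^T := Σ_{t=1}^T ⟨Aᵀ x^t, y^t⟩ − min_{ŷ ∈ Y} Σ_{t=1}^T ⟨Aᵀ x^t, ŷ⟩, and the saddle-point gap γ(x̄, ȳ) := max_{x̂ ∈ X} ⟨x̂, A ȳ⟩ − min_{ŷ ∈ Y} ⟨x̄, A ŷ⟩. Then γ(x̄, ȳ) ≤ (R_X^T + R_Y^T)/T. -/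
theorem saddle_point_gap_le_avg_regret {m n : ℕ}
    (X : Set (Fin m → ℝ)) (Y : Set (Fin n → ℝ))
    (hXne : X.Nonempty) (hXc : IsCompact X) (hXconv : Convex ℝ X)
    (hYne : Y.Nonempty) (hYc : IsCompact Y) (hYconv : Convex ℝ Y)
    (A : Matrix (Fin m) (Fin n) ℝ)
    (T : ℕ) (hT : 1 ≤ T)
    (x : ℕ → Fin m → ℝ) (y : ℕ → Fin n → ℝ)
    (hx : ∀ t < T, x t ∈ X) (hy : ∀ t < T, y t ∈ Y)
    -- average decisions
    (xbar : Fin m → ℝ) (hxbar : xbar = (T : ℝ)⁻¹ • ∑ t ∈ Finset.range T, x t)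
    (ybar : Fin n → ℝ) (hybar : ybar = (T : ℝ)⁻¹ • ∑ t ∈ Finset.range T, y t)
    -- cumulative regrets
    (RX RY : ℝ)
    (hRX : RX = (∑ t ∈ Finset.range T, dot (-(A.mulVec (y t))) (x t))
      - sInf ((fun xhat => ∑ t ∈ Finset.range T, dot (-(A.mulVec (y t))) xhat) '' X))
    (hRY : RY = (∑ t ∈ Finset.range T, dot (A.transpose.mulVec (x t)) (y t))
      - sInf ((fun yhat => ∑ t ∈ Finset.range T, dot (A.transpose.mulVec (x t)) yhat) '' Y))
    -- saddle-point gap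
    (γ : ℝ)
    (hγ : γ = sSup ((fun xhat => dot xhat (A.mulVec ybar)) '' X)
      - sInf ((fun yhat => dot xbar (A.mulVec yhat)) '' Y)) :
    γ ≤ (RX + RY) / T := by
  have hT0 : (0 : ℝ) < T := by exact_mod_cast hT
  have hd : ∀ {k : ℕ} (u v : Fin k → ℝ), dot u v = u ⬝ᵥ v := fun u v => rfl
  simp only [hd] at hRX hRY hγ
  have hT1 : (T : ℝ) * (T : ℝ)⁻¹ = 1 := mul_inv_cancel₀ hT0.ne'
  have e1 : ∀ u : Fin m → ℝ, ∑ t ∈ Finset.range T, (-(A.mulVec (y t))) ⬝ᵥ u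
      = -(T * (u ⬝ᵥ (A.mulVec ybar))) := by
    intro u
    rw [hybar, Matrix.mulVec_smul, dotProduct_smul, smul_eq_mul, ← mul_assoc, hT1, one_mul,
      Matrix.mulVec_sum, dotProduct_sum, ← Finset.sum_neg_distrib]
    refine Finset.sum_congr rfl fun t _ => ?_
    rw [neg_dotProduct, dotProduct_comm]
  have e0 : ∀ (v : Fin m → ℝ) (w : Fin n → ℝ),
      (A.transpose.mulVec v) ⬝ᵥ w = v ⬝ᵥ A.mulVec w := by
    intro v w
    rw [Matrix.mulVec_transpose, Matrix.dotProduct_mulVec]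
  have e2 : ∀ w : Fin n → ℝ, ∑ t ∈ Finset.range T, (A.transpose.mulVec (x t)) ⬝ᵥ w
      = T * (xbar ⬝ᵥ (A.mulVec w)) := by
    intro w
    rw [hxbar, smul_dotProduct, smul_eq_mul, ← mul_assoc, hT1, one_mul, sum_dotProduct]
    exact Finset.sum_congr rfl fun t _ => e0 _ _
  have e3 : (∑ t ∈ Finset.range T, (-(A.mulVec (y t))) ⬝ᵥ (x t))
      + (∑ t ∈ Finset.range T, (A.transpose.mulVec (x t)) ⬝ᵥ (y t)) = 0 := by
    rw [← Finset.sum_add_distrib]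
    refine Finset.sum_eq_zero fun t _ => ?_
    rw [e0, neg_dotProduct, dotProduct_comm, neg_add_cancel]
  simp only [e1] at hRX
  simp only [e2] at hRY
  have b1 : BddBelow ((fun u : Fin m → ℝ => -((T : ℝ) * (u ⬝ᵥ (A.mulVec ybar)))) '' X) := by
    refine (hXc.image ?_).bddBelow
    unfold dotProduct
    fun_prop
  have b2 : BddBelow ((fun w : Fin n → ℝ => (T : ℝ) * (xbar ⬝ᵥ (A.mulVec w))) '' Y) := by
    refine (hYc.image ?_).bddBelow
    unfold dotProduct Matrix.mulVec dotProduct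
    fun_prop
  have k1 : sSup ((fun u : Fin m → ℝ => u ⬝ᵥ (A.mulVec ybar)) '' X)
      ≤ -(sInf ((fun u : Fin m → ℝ => -((T : ℝ) * (u ⬝ᵥ (A.mulVec ybar)))) '' X)) / T := by
    refine csSup_le (hXne.image _) ?_
    rintro _ ⟨u, hu, rfl⟩
    have := csInf_le b1 ⟨u, hu, rfl⟩
    rw [le_div_iff₀ hT0]
    dsimp only at this ⊢
    linarith
  have k2 : (sInf ((fun w : Fin n → ℝ => (T : ℝ) * (xbar ⬝ᵥ (A.mulVec w))) '' Y)) / T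
      ≤ sInf ((fun w : Fin n → ℝ => xbar ⬝ᵥ (A.mulVec w)) '' Y) := by
    refine le_csInf (hYne.image _) ?_
    rintro _ ⟨w, hw, rfl⟩
    have := csInf_le b2 ⟨w, hw, rfl⟩
    rw [div_le_iff₀ hT0]
    dsimp only at this ⊢
    linarith
  rw [le_div_iff₀ hT0, hγ, hRX, hRY]
  rw [le_div_iff₀ hT0] at k1
  rw [div_le_iff₀ hT0] at k2
  rw [sub_mul]
  linarith
end

section
/- Let X ⊆ ℝ^m and Y ⊆ ℝ^n be nonempty compact convex sets and A an m×n real matrix. For each T ≥ 1, let x^1,…,x^T ∈ X and y^1,…,y^T ∈ Y (as prefixes of fixed infinite sequences), with averages x̄^T := (1/T) Σ_{t=1}^T x^t and ȳ^T := (1/T) Σ_{t=1}^T y^t, and cumulative regrets R_X^T := Σ_{t=1}^T ⟨−A y^t, x^t⟩ − min_{x̂ ∈ X} Σ_{t=1}^T ⟨−A y^t, x̂⟩ and R_Y^T := Σ_{t=1}^T ⟨Aᵀ x^t, y^t⟩ − min_{ŷ ∈ Y} Σ_{t=1}^T ⟨Aᵀ x^t, ŷ⟩. If R_X^T / T → 0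 and R_Y^T / T → 0 as T → ∞, then the saddle-point gap γ(x̄^T, ȳ^T) := max_{x̂ ∈ X} ⟨x̂, A ȳ^T⟩ − min_{ŷ ∈ Y} ⟨x̄^T, A ŷ⟩ converges to 0 as T → ∞. -/
open Filter

theorem dot_eq_dotProduct {k : ℕ} (u v : Fin k → ℝ) : dot u v = dotProduct u v := rfl

theorem saddle_point_gap_tendsto_zero {m n : ℕ}
    (X : Set (Fin m → ℝ)) (Y : Set (Fin n → ℝ))
    (hXne : X.Nonempty) (hXc : IsCompact X) (hXconv : Convex ℝ X)
    (hYne : Y.Nonempty) (hYc : IsCompact Y) (hYconv : Convex ℝ Y)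
    (A : Matrix (Fin m) (Fin n) ℝ)
    (x : ℕ → Fin m → ℝ) (y : ℕ → Fin n → ℝ)
    (hx : ∀ t, x t ∈ X) (hy : ∀ t, y t ∈ Y)
    -- average decisions
    (xbar : ℕ → Fin m → ℝ) (hxbar : ∀ T, xbar T = (T : ℝ)⁻¹ • ∑ t ∈ Finset.range T, x t)
    (ybar : ℕ → Fin n → ℝ) (hybar : ∀ T, ybar T = (T : ℝ)⁻¹ • ∑ t ∈ Finset.range T, y t)
    -- cumulative regrets
    (RX RY : ℕ → ℝ)
    (hRX : ∀ T, RX T = (∑ t ∈ Finset.range T, dot (-(A.mulVec (y t))) (x t))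
      - sInf ((fun xhat => ∑ t ∈ Finset.range T, dot (-(A.mulVec (y t))) xhat) '' X))
    (hRY : ∀ T, RY T = (∑ t ∈ Finset.range T, dot (A.transpose.mulVec (x t)) (y t))
      - sInf ((fun yhat => ∑ t ∈ Finset.range T, dot (A.transpose.mulVec (x t)) yhat) '' Y))
    -- vanishing average regret
    (hRXlim : Tendsto (fun T : ℕ => RX T / T) atTop (nhds 0))
    (hRYlim : Tendsto (fun T : ℕ => RY T / T) atTop (nhds 0))
    -- saddle-point gap
    (γ : ℕ → ℝ)
    (hγ : ∀ T, γ T = sSup ((fun xhat => dot xhat (A.mulVec (ybar T))) '' X)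
      - sInf ((fun yhat => dot (xbar T) (A.mulVec yhat)) '' Y)) :
    Tendsto γ atTop (nhds 0) := by
  open scoped Pointwise in
  have key : ∀ T : ℕ, 0 < T → γ T = RX T / T + RY T / T := by
    intro T hT
    have hT0 : (T : ℝ) ≠ 0 := by positivity
    have h1 : ∀ u : Fin m → ℝ, ∑ t ∈ Finset.range T, dot (-(A.mulVec (y t))) u
        = (-(T : ℝ)) * dot u (A.mulVec (ybar T)) := by
      intro u
      simp only [dot_eq_dotProduct]
      rw [hybar, Matrix.mulVec_smul, dotProduct_smul, Matrix.mulVec_sum, dotProduct_sum, smul_eq_mul,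
        ← mul_assoc, neg_mul, mul_inv_cancel₀ hT0, neg_one_mul, ← Finset.sum_neg_distrib]
      refine Finset.sum_congr rfl fun t _ => ?_
      rw [neg_dotProduct, dotProduct_comm]
    have h2 : ∀ v : Fin n → ℝ, ∑ t ∈ Finset.range T, dot (A.transpose.mulVec (x t)) v
        = (T : ℝ) * dot (xbar T) (A.mulVec v) := by
      intro v
      simp only [dot_eq_dotProduct]
      rw [hxbar, smul_dotProduct, sum_dotProduct, smul_eq_mul,
        ← mul_assoc, mul_inv_cancel₀ hT0, one_mul]
      refine Finset.sum_congr rfl fun t _ => ?_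
      rw [Matrix.mulVec_transpose, Matrix.dotProduct_mulVec]
    have h3 : ∑ t ∈ Finset.range T, dot (-(A.mulVec (y t))) (x t)
        = - ∑ t ∈ Finset.range T, dot (A.transpose.mulVec (x t)) (y t) := by
      rw [← Finset.sum_neg_distrib]
      refine Finset.sum_congr rfl fun t _ => ?_
      simp only [dot_eq_dotProduct]
      rw [Matrix.mulVec_transpose, ← Matrix.dotProduct_mulVec, neg_dotProduct, dotProduct_comm]
    have e1 : (fun xhat => ∑ t ∈ Finset.range T, dot (-(A.mulVec (y t))) xhat) '' X
        = (-(T : ℝ)) • ((fun xhat => dot xhat (A.mulVec (ybar T))) '' X) := by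
      rw [← Set.image_smul, Set.image_image]
      simp only [h1, smul_eq_mul]
    have e2 : (fun yhat => ∑ t ∈ Finset.range T, dot (A.transpose.mulVec (x t)) yhat) '' Y
        = (T : ℝ) • ((fun yhat => dot (xbar T) (A.mulVec yhat)) '' Y) := by
      rw [← Set.image_smul, Set.image_image]
      simp only [h2, smul_eq_mul]
    rw [hγ, hRX, hRY, e1, e2, Real.sInf_smul_of_nonpos (by simp),
      Real.sInf_smul_of_nonneg (by positivity), h3, smul_eq_mul, smul_eq_mul]
    field_simp
    ring
  have hlim := hRXlim.add hRYlim
  rw [add_zero] at hlim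
  refine hlim.congr' ?_
  filter_upwards [eventually_gt_atTop 0] with T hT
  exact (key T hT).symm
end

section
/- Let N ≥ 0 and let Z_0 ⊆ ℝ^{d_0} be a nonempty compact convex set. For each i = 1,…,N, let X_i ⊆ ℝ^{s_i} be a nonempty compact convex set and let h_i be an affine real-valued function on the ambient space of Z_{i−1} that is nonnegative on Z_{i−1}, and define Z_i := Z_{i−1} ⊴^{h_i} X_i. Then for every i = 0,…,N, the set Z_i is nonempty, compact, and convex. -/
/-- The ambient space `ℝ^{d₀} × ℝ^{s 1} × ⋯ × ℝ^{s i}` (left-associated) of the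
`i`-th set in a chain of scaled extensions. -/
def Spc (d₀ : ℕ) (s : ℕ → ℕ) : ℕ → Type
  | 0 => Fin d₀ → ℝ
  | i + 1 => Spc d₀ s i × (Fin (s (i + 1)) → ℝ)

noncomputable instance SpcNormedAddCommGroup (d₀ : ℕ) (s : ℕ → ℕ) :
    ∀ i, NormedAddCommGroup (Spc d₀ s i)
  | 0 => inferInstanceAs (NormedAddCommGroup (Fin d₀ → ℝ))
  | i + 1 =>
    letI := SpcNormedAddCommGroup d₀ s i
    inferInstanceAs (NormedAddCommGroup (Spc d₀ s i × (Fin (s (i + 1)) → ℝ)))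

noncomputable instance SpcNormedSpace (d₀ : ℕ) (s : ℕ → ℕ) :
    ∀ i, NormedSpace ℝ (Spc d₀ s i)
  | 0 => inferInstanceAs (NormedSpace ℝ (Fin d₀ → ℝ))
  | i + 1 =>
    letI := SpcNormedAddCommGroup d₀ s i
    letI := SpcNormedSpace d₀ s i
    inferInstanceAs (NormedSpace ℝ (Spc d₀ s i × (Fin (s (i + 1)) → ℝ)))

/-- The scaled extension `Z ⊴^h X = {(z, h(z) • y) : z ∈ Z, y ∈ X}`. -/
def scExt {E F : Type*} [SMul ℝ F] (Z : Set E) (X : Set F) (h : E → ℝ) :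
    Set (E × F) :=
  {p | ∃ z ∈ Z, ∃ y ∈ X, p = (z, h z • y)}

theorem scExt_convex_aux {E F : Type*} [AddCommGroup E] [Module ℝ E] [AddCommGroup F] [Module ℝ F]
    (Z : Set E) (X : Set F) (h : E → ℝ) (hZ : Convex ℝ Z) (hX : Convex ℝ X)
    (l : E →ₗ[ℝ] ℝ) (c : ℝ) (hl : ∀ z, h z = l z + c) (hnn : ∀ z ∈ Z, 0 ≤ h z) :
    Convex ℝ (scExt Z X h) := by
  rintro _ ⟨z₁, hz₁, y₁, hy₁, rfl⟩ _ ⟨z₂, hz₂, y₂, hy₂, rfl⟩ a b ha hb hab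
  have hh : h (a • z₁ + b • z₂) = a * h z₁ + b * h z₂ := by
    simp only [hl, map_add, map_smul, smul_eq_mul]
    linear_combination (-c) * hab
  have h1 : 0 ≤ a * h z₁ := mul_nonneg ha (hnn _ hz₁)
  have h2 : 0 ≤ b * h z₂ := mul_nonneg hb (hnn _ hz₂)
  have hz := hZ hz₁ hz₂ ha hb hab
  rcases (add_nonneg h1 h2).eq_or_lt with h0 | h0
  · refine ⟨_, hz, y₁, hy₁, ?_⟩
    have e1 : a * h z₁ = 0 := by linarith
    have e2 : b * h z₂ = 0 := by linarith
    ext1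
    · simp
    · simp [hh, smul_smul, e1, e2]
  · refine ⟨_, hz, _, hX hy₁ hy₂ (div_nonneg h1 h0.le) (div_nonneg h2 h0.le)
      (by rw [← add_div, div_self h0.ne']), ?_⟩
    ext1
    · simp
    · simp only [Prod.snd_add, Prod.smul_snd, hh, smul_add, smul_smul]
      rw [mul_div_cancel₀ _ h0.ne', mul_div_cancel₀ _ h0.ne']

theorem scExt_compact_aux {E F : Type*} [TopologicalSpace E] [TopologicalSpace F]
    [SMul ℝ F] [ContinuousSMul ℝ F]
    (Z : Set E) (X : Set F) (h : E → ℝ) (hZ : IsCompact Z) (hX : IsCompact X)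
    (hc : Continuous h) : IsCompact (scExt Z X h) := by
  have : scExt Z X h = (fun p : E × F => (p.1, h p.1 • p.2)) '' (Z ×ˢ X) := by
    ext p
    constructor
    · rintro ⟨z, hz, y, hy, rfl⟩
      exact ⟨(z, y), ⟨hz, hy⟩, rfl⟩
    · rintro ⟨⟨z, y⟩, ⟨hz, hy⟩, rfl⟩
      exact ⟨z, hz, y, hy, rfl⟩
  rw [this]
  exact (hZ.prod hX).image (by fun_prop)

theorem Spc_finite_aux (d₀ : ℕ) (s : ℕ → ℕ) : ∀ i, FiniteDimensional ℝ (Spc d₀ s i)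
  | 0 => inferInstanceAs (FiniteDimensional ℝ (Fin d₀ → ℝ))
  | i + 1 =>
    haveI := Spc_finite_aux d₀ s i
    inferInstanceAs (FiniteDimensional ℝ (Spc d₀ s i × (Fin (s (i + 1)) → ℝ)))

theorem chain_scaledExt_nonempty_isCompact_convex
    (d₀ : ℕ) (s : ℕ → ℕ) (N : ℕ)
    (X : (i : ℕ) → Set (Fin (s i) → ℝ))
    (Z : (i : ℕ) → Set (Spc d₀ s i))
    -- `h i` is the affine function used to build `Z (i+1)` from `Z i`
    (h : (i : ℕ) → Spc d₀ s i → ℝ)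
    (hZ0ne : (Z 0).Nonempty) (hZ0c : IsCompact (Z 0)) (hZ0conv : Convex ℝ (Z 0))
    (hXne : ∀ i, 1 ≤ i → i ≤ N → (X i).Nonempty)
    (hXc : ∀ i, 1 ≤ i → i ≤ N → IsCompact (X i))
    (hXconv : ∀ i, 1 ≤ i → i ≤ N → Convex ℝ (X i))
    (haff : ∀ i < N, ∃ (l : Spc d₀ s i →ₗ[ℝ] ℝ) (c : ℝ), ∀ z, h i z = l z + c)
    (hnn : ∀ i < N, ∀ z ∈ Z i, 0 ≤ h i z)
    (hrec : ∀ i < N, Z (i + 1) = scExt (Z i) (X (i + 1)) (h i)) :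
    ∀ i ≤ N, (Z i).Nonempty ∧ IsCompact (Z i) ∧ Convex ℝ (Z i) := by
  intro i
  induction i with
  | zero => exact fun _ => ⟨hZ0ne, hZ0c, hZ0conv⟩
  | succ i ih =>
    intro hi
    obtain ⟨⟨z, hz⟩, hc, hconv⟩ := ih (by omega)
    obtain ⟨l, c, hl⟩ := haff i hi
    obtain ⟨y, hy⟩ := hXne (i + 1) (by omega) hi
    have hcont : Continuous (h i) := by
      have := Spc_finite_aux d₀ s i
      have e : h i = fun z => l z + c := funext hl
      rw [e]
      exact l.continuous_of_finiteDimensional.add continuous_const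
    rw [hrec i hi]
    exact ⟨⟨_, z, hz, y, hy, rfl⟩,
      scExt_compact_aux _ _ _ hc (hXc (i + 1) (by omega) hi) hcont,
      scExt_convex_aux _ _ _ hconv (hXconv (i + 1) (by omega) hi) l c hl (hnn i hi)⟩
end
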